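/- No escape from ℛ on the relevant timescale: for the periodic SPM at L=L_c=⌊e^{β/2}⌋ and β sufficiently large, sup_{σ∈𝒢} ℙ_σ[τ_{ℛ^c} < β²e^{4β}] ≤ C·e^{-β/4} for some constant C; equivalently, with 𝓛_ℛ the principal submatrix of the generator 𝓛 indexed by ℛ (the killed generator), sup_{σ∈𝒢} (1 − (e^{t𝓛_ℛ}𝟙)(σ)) ≤ C·e^{-β/4} for t=β²e^{4β}. -/

import Mathlib

open scoped BigOperators

attribute [local instance] Classical.propDecidable

noncomputable section

namespace SPMP

/-- Spin configurations on the `L × L` torus; `true` codes spin `+1`. -/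
abbrev ConfigP (L : ℕ) := Fin L × Fin L → Bool

/-- The real spin value of a Boolean spin. -/
def sval (b : Bool) : ℝ := if b then 1 else -1

/-- Cyclic successor on `Fin L`. -/
def fsucc {L : ℕ} (i : Fin L) : Fin L := ⟨(i.val + 1) % L, Nat.mod_lt _ i.pos⟩

/-- The periodic plaquette variable
`p_x(σ) = σ_{(x₁,x₂)} σ_{(x₁+1,x₂)} σ_{(x₁,x₂+1)} σ_{(x₁+1,x₂+1)}` (coordinates mod `L`). -/
def plaqP (L : ℕ) (σ : ConfigP L) (x : Fin L × Fin L) : ℝ :=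
  sval (σ x) * sval (σ (fsucc x.1, x.2)) * sval (σ (x.1, fsucc x.2)) *
    sval (σ (fsucc x.1, fsucc x.2))

/-- The periodic Hamiltonian `H(σ) = -(1/2) ∑_x p_x(σ)`. -/
def hamP (L : ℕ) (σ : ConfigP L) : ℝ := -(1 / 2) * ∑ x : Fin L × Fin L, plaqP L σ x

/-- The Gibbs measure `π(σ) = e^{-βH(σ)}/Z`. -/
def gibbsP (L : ℕ) (β : ℝ) (σ : ConfigP L) : ℝ :=
  Real.exp (-β * hamP L σ) / ∑ η : ConfigP L, Real.exp (-β * hamP L η)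

/-- Flip one spin. -/
def flipP (L : ℕ) (σ : ConfigP L) (x : Fin L × Fin L) : ConfigP L :=
  fun i => if i = x then !(σ i) else σ i

/-- Metropolis rate of the move `σ → η`: `min(1, e^{-β(H(η)-H(σ))})`. -/
def metroRateP (L : ℕ) (β : ℝ) (σ η : ConfigP L) : ℝ :=
  min 1 (Real.exp (-β * (hamP L η - hamP L σ)))

/-- The Glauber generator of the periodic dynamics, as a matrix. -/
def genP (L : ℕ) (β : ℝ) : Matrix (ConfigP L) (ConfigP L) ℝ :=
  fun σ η =>
    if η = σ then -(∑ x : Fin L × Fin L, metroRateP L β σ (flipP L σ x))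
    else ∑ x : Fin L × Fin L, if η = flipP L σ x then metroRateP L β σ (flipP L σ x) else 0

/-- Entrywise matrix exponential `∑ₖ Aᵏ/k!`. -/
def mexp {n : Type*} [Fintype n] [DecidableEq n] (A : Matrix n n ℝ) : Matrix n n ℝ :=
  fun i j => ∑' k : ℕ, (A ^ k) i j / (Nat.factorial k : ℝ)

/-- Total-variation distance between two (probability) vectors. -/
def tv {n : Type*} [Fintype n] (μ ν : n → ℝ) : ℝ := (∑ s, |μ s - ν s|) / 2

/-- The `ε`-mixing time of the periodic Glauber dynamics. -/
def tmixP (L : ℕ) (β ε : ℝ) : ℝ :=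
  sInf {t : ℝ | 0 < t ∧ ∀ σ : ConfigP L, tv (mexp (t • genP L β) σ) (gibbsP L β) < ε}

/-- The set of ground states: minimizers of the Hamiltonian. -/
def GroundP (L : ℕ) : Set (ConfigP L) := {σ | ∀ η : ConfigP L, hamP L σ ≤ hamP L η}

/-- The critical length scale `L_c = ⌊e^{β/2}⌋`. -/
def Lc (β : ℝ) : ℕ := ⌊Real.exp (β / 2)⌋₊

end SPMP

namespace SPMP

/-- Flip a cyclic segment of length `k` of row `r`, starting at position `m`. -/
def flipRowSeg (L : ℕ) (σ : ConfigP L) (r m : Fin L) (k : ℕ) : ConfigP L :=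
  fun z => if z.2 = r ∧ ∃ t : ℕ, t < k ∧ z.1.val = (m.val + t) % L then !(σ z) else σ z

/-- Flip a cyclic segment of length `k` of column `c`, starting at position `m`. -/
def flipColSeg (L : ℕ) (σ : ConfigP L) (c m : Fin L) (k : ℕ) : ConfigP L :=
  fun z => if z.1 = c ∧ ∃ t : ℕ, t < k ∧ z.2.val = (m.val + t) % L then !(σ z) else σ z

/-- `ℛ_k`: the configurations `R(σ,η,m,k)` obtained from a ground state by flipping a cyclic
segment of length `k` of a single row or column (the configurations at step `k` of the
minimal-length, minimal-energy paths between ground states, Definition `DefMinEnMinLPaths`). -/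
def Rk (L k : ℕ) : Set (ConfigP L) :=
  {ζ | ∃ σ ∈ GroundP L, ∃ i m : Fin L,
    ζ = flipRowSeg L σ i m k ∨ ζ = flipColSeg L σ i m k}

/-- `ℛ = ∪_{k=0}^{L} ℛ_k`. -/
def Rset (L : ℕ) : Set (ConfigP L) := {ζ | ∃ k ≤ L, ζ ∈ Rk L k}

/-- `ℛ_init = ℛ₁ ∪ ℛ_{L-1}`: configurations one spin flip away from a ground state. -/
def Rinit (L : ℕ) : Set (ConfigP L) := Rk L 1 ∪ Rk L (L - 1)

/-- `ℛ' = ℛ \ (𝒢 ∪ ℛ_init)`. -/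
def Rmid (L : ℕ) : Set (ConfigP L) := Rset L \ (GroundP L ∪ Rinit L)

end SPMP

namespace SPMP

/-- The killed generator `𝓛_ℛ` (the principal submatrix of `𝓛` on `ℛ`, extended by zero). -/
def killedGen (L : ℕ) (β : ℝ) : Matrix (ConfigP L) (ConfigP L) ℝ :=
  fun σ η => if σ ∈ Rset L ∧ η ∈ Rset L then genP L β σ η else 0

end SPMP

open SPMP

/-! A function `f ≤ 𝟙_ℛ` with `f = 1` on the ground states and `𝓛_ℛ f ≥ -δ 𝟙_ℛ` forces
`1 - e^{t𝓛_ℛ}𝟙_ℛ ≤ tδ` on the ground states, because the semigroup is positive and contracts `𝟙_ℛ`.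
Such an `f` is obtained from a concave function of the length of the flipped arc. Away from the
ground states, the flips that lengthen the arc have rate at most one and those that shorten it have
rate exactly one. They are equally numerous for arcs of length at least two, so concavity makes
their joint drift positive. It beats the rate of leaving `ℛ`: every other flip costs energy at least
`2`, and at most `16` of them cost less than `4`, since each must touch one of the at most four
defects. A negative drift remains only at the ground states, where each of the `L²` flips costs `4`
and decreases `f` by `O(L e^{-2β})`, so that `δ = O(L³ e^{-6β})`. -/

namespace SPMP

/-! ### Semigroups of matrices with nonnegative off-diagonal entries -/

section Semigroup

open scoped Matrix.Norms.Operator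
open Matrix NormedSpace

variable {n : Type*} [Fintype n]

lemma mulVec_mono_of_nonneg {M : Matrix n n ℝ} (hM : ∀ i j, 0 ≤ M i j) {f g : n → ℝ}
    (hfg : f ≤ g) : M *ᵥ f ≤ M *ᵥ g :=
  fun i => dotProduct_le_dotProduct_of_nonneg_left hfg (hM i)

variable [DecidableEq n] {A : Matrix n n ℝ}

lemma hasSum_exp_apply (A : Matrix n n ℝ) (i j : n) :
    HasSum (fun k : ℕ => (A ^ k) i j / (k.factorial : ℝ)) (exp A i j) := by
  have hsum := (exp_series_hasSum_exp' (𝕂 := ℝ) A).mapL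
    (LinearMap.toContinuousLinearMap (entryLinearMap ℝ ℝ i j))
  have hentry : HasSum (fun k : ℕ => (k.factorial : ℝ)⁻¹ * (A ^ k) i j) (exp A i j) := hsum
  simpa only [div_eq_inv_mul] using hentry

lemma mexp_eq_exp (A : Matrix n n ℝ) : mexp A = exp A :=
  Matrix.ext fun i j => (hasSum_exp_apply A i j).tsum_eq

lemma exp_apply_nonneg_of_nonneg (hA : ∀ i j, 0 ≤ A i j) (i j : n) : 0 ≤ exp A i j :=
  (hasSum_exp_apply A i j).nonneg fun k =>
    div_nonneg (pow_apply_nonneg hA k i j) (Nat.cast_nonneg _)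

-- Adding a multiple of the identity makes all entries nonnegative and rescales the exponential.
lemma exp_apply_nonneg (hA : ∀ i j, i ≠ j → 0 ≤ A i j) (i j : n) : 0 ≤ exp A i j := by
  set c : ℝ := ∑ i, |A i i|
  have hshift : ∀ i j, 0 ≤ (A + algebraMap ℝ _ c) i j := by
    intro i j
    rcases eq_or_ne i j with rfl | hij
    · have hdiag : |A i i| ≤ c :=
        Finset.single_le_sum (f := fun i => |A i i|) (fun _ _ => abs_nonneg _) (Finset.mem_univ i)
      have hneg := neg_abs_le (A i i)
      rw [Matrix.add_apply, algebraMap_matrix_apply, if_pos rfl, Algebra.algebraMap_self_apply]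
      linarith
    · simpa [algebraMap_matrix_apply, hij] using hA i j hij
  have hsplit : exp A = Real.exp (-c) • exp (A + algebraMap ℝ _ c) := by
    have hscalar : exp (algebraMap ℝ (Matrix n n ℝ) (-c)) = algebraMap ℝ _ (Real.exp (-c)) := by
      rw [Real.exp_eq_exp_ℝ]
      exact (algebraMap_exp_comm (𝔸 := Matrix n n ℝ) (-c)).symm
    conv_lhs => rw [show A = algebraMap ℝ _ (-c) + (A + algebraMap ℝ _ c) by
      rw [map_neg]; abel]
    rw [Matrix.exp_add_of_commute _ _ (Algebra.commute_algebraMap_left _ _), hscalar,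
      ← Algebra.smul_def]
  rw [hsplit]
  exact mul_nonneg (Real.exp_pos _).le (exp_apply_nonneg_of_nonneg hshift i j)

lemma hasDerivAt_exp_smul_mulVec (A : Matrix n n ℝ) (f : n → ℝ) (i : n) (s : ℝ) :
    HasDerivAt (fun u : ℝ => (exp (u • A) *ᵥ f) i) ((exp (s • A) *ᵥ (A *ᵥ f)) i) s := by
  rw [mulVec_mulVec]
  exact (LinearMap.toContinuousLinearMap
    (LinearMap.proj i ∘ₗ (mulVecBilin ℝ ℝ).flip f)).hasFDerivAt.comp_hasDerivAt s
      (hasDerivAt_exp_smul_const (𝕂 := ℝ) A s)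

-- Duhamel: `e^{uA}f + u g` has derivative `e^{uA}(A f) + g ≥ g - e^{uA}g ≥ 0` in `u`.
lemma le_exp_smul_mulVec_add (hA : ∀ i j, i ≠ j → 0 ≤ A i j) {f g : n → ℝ}
    (hg : ∀ s : ℝ, 0 ≤ s → exp (s • A) *ᵥ g ≤ g) (hf : -g ≤ A *ᵥ f) {t : ℝ} (ht : 0 ≤ t) :
    f ≤ exp (t • A) *ᵥ f + t • g := by
  intro i
  have hderiv (u : ℝ) : HasDerivAt (fun u : ℝ => (exp (u • A) *ᵥ f) i + u * g i)
      ((exp (u • A) *ᵥ (A *ᵥ f)) i + g i) u :=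
    (hasDerivAt_exp_smul_mulVec A f i u).add (hasDerivAt_mul_const (g i))
  have hmono : MonotoneOn (fun u : ℝ => (exp (u • A) *ᵥ f) i + u * g i) (Set.Ici 0) := by
    refine monotoneOn_of_hasDerivWithinAt_nonneg (convex_Ici 0)
      (fun u _ => (hderiv u).continuousAt.continuousWithinAt)
      (fun u _ => (hderiv u).hasDerivWithinAt) fun u hu => ?_
    have hu0 : 0 ≤ u := interior_subset hu
    have hpos : ∀ i j, 0 ≤ exp (u • A) i j :=
      exp_apply_nonneg fun i j hij => mul_nonneg hu0 (hA i j hij)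
    have hle := mulVec_mono_of_nonneg hpos hf i
    rw [mulVec_neg] at hle
    simp only [Pi.neg_apply] at hle
    linarith [hg u hu0 i]
  simpa using hmono Set.self_mem_Ici ht ht

lemma exp_smul_mulVec_le (hA : ∀ i j, i ≠ j → 0 ≤ A i j) {g : n → ℝ} (hg : A *ᵥ g ≤ 0)
    {t : ℝ} (ht : 0 ≤ t) : exp (t • A) *ᵥ g ≤ g := by
  simpa [mulVec_neg] using le_exp_smul_mulVec_add hA (f := -g) (g := 0) (by simp)
    (by simpa [mulVec_neg] using hg) ht

theorem sub_smul_le_exp_smul_mulVec (hA : ∀ i j, i ≠ j → 0 ≤ A i j) {f g : n → ℝ} {δ t : ℝ}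
    (hδ : 0 ≤ δ) (ht : 0 ≤ t) (hfg : f ≤ g) (hg : A *ᵥ g ≤ 0) (hf : -(δ • g) ≤ A *ᵥ f) :
    f - (t * δ) • g ≤ exp (t • A) *ᵥ g := by
  have hsuper (s : ℝ) (hs : 0 ≤ s) : exp (s • A) *ᵥ (δ • g) ≤ δ • g := by
    rw [mulVec_smul]
    exact smul_le_smul_of_nonneg_left (exp_smul_mulVec_le hA hg hs) hδ
  have hpos : ∀ i j, 0 ≤ exp (t • A) i j :=
    exp_apply_nonneg fun i j hij => mul_nonneg ht (hA i j hij)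
  calc f - (t * δ) • g ≤ exp (t • A) *ᵥ f := by
        rw [mul_smul, sub_le_iff_le_add]
        exact le_exp_smul_mulVec_add hA hsuper hf ht
    _ ≤ exp (t • A) *ᵥ g := mulVec_mono_of_nonneg hpos hfg

end Semigroup

/-! ### Cyclic arcs and their boundaries -/

section Arc

open Finset
open scoped Fin.NatCast Fin.CommRing symmDiff

variable {L : ℕ} {a m : Fin L} {k : ℕ}

/-- The cyclic arc consisting of the `k` sites `m, m + 1, …, m + (k - 1)`, for `k ≤ L`. -/
def arc (m : Fin L) (k : ℕ) : Finset (Fin L) := {a | (a - m).val < k}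

lemma mem_arc : a ∈ arc m k ↔ (a - m).val < k := by
  rw [arc, mem_filter_univ]

lemma arc_zero (m : Fin L) : arc m 0 = ∅ :=
  eq_empty_of_forall_notMem fun _ => by simp [mem_arc]

lemma arc_self (m : Fin L) : arc m L = univ :=
  eq_univ_of_forall fun a => mem_arc.2 (a - m).isLt

variable [NeZero L]

lemma val_add_one_eq_ite (a : Fin L) :
    (a + 1).val = if a.val + 1 = L then 0 else a.val + 1 := by
  rw [Fin.val_add, Fin.val_one', Nat.add_mod_mod]
  split_ifs with h
  · rw [h, Nat.mod_self]
  · exact Nat.mod_eq_of_lt (by omega)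

lemma fsucc_eq_add_one (a : Fin L) : fsucc a = a + 1 :=
  Fin.ext <| by rw [fsucc, Fin.val_add, Fin.val_one', Nat.add_mod_mod]

lemma eq_add_natCast_iff (hk : k < L) : a = m + (k : Fin L) ↔ (a - m).val = k := by
  rw [← sub_eq_iff_eq_add', Fin.ext_iff, Fin.val_cast_of_lt hk]

lemma eq_sub_one_iff : a = m - 1 ↔ (a - m).val + 1 = L := by
  have hsucc := val_add_one_eq_ite (a - m)
  rw [eq_sub_iff_add_eq, ← sub_eq_zero, ← sub_add_eq_add_sub, Fin.ext_iff, Fin.val_zero, hsucc]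
  split_ifs with h <;> simp [h]

lemma mem_arc_iff_exists (hk : k ≤ L) :
    a ∈ arc m k ↔ ∃ t < k, a.val = (m.val + t) % L := by
  rw [mem_arc]
  constructor
  · intro h
    refine ⟨_, h, ?_⟩
    rw [← Fin.val_add, add_sub_cancel]
  · rintro ⟨t, ht, hat⟩
    have ha : a = m + (t : Fin L) :=
      Fin.ext <| by rw [hat, Fin.val_add, Fin.val_natCast, Nat.add_mod_mod]
    rwa [(eq_add_natCast_iff (ht.trans_le hk)).1 ha]

lemma arc_one (m : Fin L) : arc m 1 = {m} := by
  ext a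
  rw [mem_arc, mem_singleton, Nat.lt_one_iff, Fin.val_eq_zero_iff, sub_eq_zero]

lemma arc_symmDiff_add (m : Fin L) (hk : k < L) :
    arc m k ∆ {m + (k : Fin L)} = arc m (k + 1) := by
  ext a
  rw [mem_symmDiff, mem_singleton, mem_arc, mem_arc, eq_add_natCast_iff hk]
  omega

lemma arc_symmDiff_sub_one (m : Fin L) (hk : k < L) :
    arc m k ∆ {m - 1} = arc (m - 1) (k + 1) := by
  ext a
  have hsucc := val_add_one_eq_ite (a - m)
  rw [mem_symmDiff, mem_singleton, mem_arc, mem_arc, eq_sub_one_iff, sub_sub_eq_add_sub,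
    ← sub_add_eq_add_sub, hsucc]
  have hlt := (a - m).isLt
  split_ifs <;> omega

lemma arc_succ_symmDiff_last (m : Fin L) (hk : k < L) :
    arc m (k + 1) ∆ {m + (k : Fin L)} = arc m k := by
  rw [← arc_symmDiff_add m hk, symmDiff_symmDiff_cancel_right]

lemma arc_succ_symmDiff_first (m : Fin L) (hk : k < L) :
    arc m (k + 1) ∆ {m} = arc (m + 1) k := by
  have hgrow := arc_symmDiff_sub_one (m + 1) hk
  rw [add_sub_cancel_right] at hgrow
  rw [← hgrow, symmDiff_symmDiff_cancel_right]

lemma compl_arc (m : Fin L) (hk : k ≤ L) : (arc m k)ᶜ = arc (m + (k : Fin L)) (L - k) := by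
  ext a
  obtain rfl | hk := hk.eq_or_lt
  · simp [arc_self, arc_zero]
  have hval : (a - (m + (k : Fin L))).val = if k ≤ (a - m).val then (a - m).val - k
      else L + (a - m).val - k := by
    rw [← sub_sub]
    split_ifs with h
    · rw [Fin.sub_val_of_le (by rwa [Fin.le_def, Fin.val_cast_of_lt hk]), Fin.val_cast_of_lt hk]
    · rw [Fin.coe_sub_iff_lt.2 (by rwa [Fin.lt_def, Fin.val_cast_of_lt hk, ← not_le]),
        Fin.val_cast_of_lt hk]
  rw [mem_compl, mem_arc, mem_arc, hval]
  have hlt := (a - m).isLt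
  split_ifs <;> omega

/-- The left endpoints of the bonds `{a, a + 1}` joining `I` to its complement. -/
def boundary (I : Finset (Fin L)) : Finset (Fin L) := {a | ¬(a ∈ I ↔ a + 1 ∈ I)}

lemma mem_boundary {I : Finset (Fin L)} : a ∈ boundary I ↔ ¬(a ∈ I ↔ a + 1 ∈ I) := by
  rw [boundary, mem_filter_univ]

lemma boundary_univ : boundary (univ : Finset (Fin L)) = ∅ := by
  simp [boundary]

lemma boundary_arc_succ (m : Fin L) (hk : k + 1 < L) :
    boundary (arc m (k + 1)) = {m - 1, m + (k : Fin L)} := by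
  ext a
  have hsucc := val_add_one_eq_ite (a - m)
  rw [mem_boundary, mem_insert, mem_singleton, mem_arc, mem_arc, eq_sub_one_iff,
    eq_add_natCast_iff (by omega), ← sub_add_eq_add_sub, hsucc]
  have hlt := (a - m).isLt
  split_ifs <;> omega

lemma boundary_singleton (hL : 1 < L) (a : Fin L) : boundary {a} = {a - 1, a} := by
  simpa [arc_one] using boundary_arc_succ a hL

lemma card_boundary_singleton (hL : 1 < L) (a : Fin L) : #(boundary {a}) = 2 := by
  have : Nontrivial (Fin L) := Fin.nontrivial_iff_two_le.2 hL
  rw [boundary_singleton hL, card_pair (by simp)]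

lemma card_boundary_arc_succ_le_two (m : Fin L) (hk : k + 1 < L) :
    #(boundary (arc m (k + 1))) ≤ 2 := by
  rw [boundary_arc_succ m hk]
  exact card_le_two

lemma mem_boundary_arc_succ (hk : k + 1 < L) :
    a ∈ boundary (arc m (k + 1)) ↔ a = m - 1 ∨ a = m + (k : Fin L) := by
  rw [boundary_arc_succ m hk, mem_insert, mem_singleton]

lemma sub_one_mem_boundary_arc_succ (hk : k + 1 < L) :
    a - 1 ∈ boundary (arc m (k + 1)) ↔ a = m ∨ a = m + ((k + 1 : ℕ) : Fin L) := by
  rw [mem_boundary_arc_succ hk, sub_left_inj, sub_eq_iff_eq_add, Nat.cast_succ, add_assoc]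

lemma card_boundary_singleton_inter_arc_le_one (hk : k + 2 < L) (ha : k = 0 → a ≠ m) :
    #(boundary {a} ∩ boundary (arc m (k + 1))) ≤ 1 := by
  have hpair : ¬(a - 1 ∈ boundary (arc m (k + 1)) ∧ a ∈ boundary (arc m (k + 1))) := by
    have hne : k = 0 → (a - m).val ≠ 0 := fun hk0 h =>
      ha hk0 (sub_eq_zero.1 (Fin.val_eq_zero_iff.1 h))
    rw [sub_one_mem_boundary_arc_succ (by omega), mem_boundary_arc_succ (by omega),
      eq_sub_one_iff, eq_add_natCast_iff (by omega), eq_add_natCast_iff (by omega),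
      ← sub_eq_zero, ← Fin.val_eq_zero_iff]
    omega
  rw [boundary_singleton (by omega), card_le_one]
  simp only [mem_inter, mem_insert, mem_singleton]
  grind

lemma card_boundary_singleton_inter_arc_eq_zero (hk : k + 1 < L)
    (hout : a ∉ ({m - 1, m + ((k + 1 : ℕ) : Fin L)} : Finset (Fin L)))
    (hin : a ∉ ({m, m + (k : Fin L)} : Finset (Fin L))) :
    #(boundary {a} ∩ boundary (arc m (k + 1))) = 0 := by
  simp only [mem_insert, mem_singleton, not_or] at hout hin
  rw [boundary_singleton (by omega), card_eq_zero, ← disjoint_iff_inter_eq_empty,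
    disjoint_insert_left, disjoint_singleton_left, sub_one_mem_boundary_arc_succ hk,
    mem_boundary_arc_succ hk]
  tauto

lemma card_boundary_singleton_inter_le_one (hL : 2 < L) (ha : a ≠ m) :
    #(boundary {a} ∩ boundary {m}) ≤ 1 := by
  simpa only [zero_add, arc_one] using
    card_boundary_singleton_inter_arc_le_one (k := 0) hL fun _ => ha

lemma card_boundary_singleton_inter_eq_zero (hL : 1 < L)
    (ha : a ∉ ({m - 1, m + 1} : Finset (Fin L))) (ham : a ≠ m) :
    #(boundary {a} ∩ boundary {m}) = 0 := by
  have harc := card_boundary_singleton_inter_arc_eq_zero (k := 0) hL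
    (by rwa [Nat.cast_one]) (by simpa using ham)
  rwa [arc_one] at harc

end Arc

/-! ### Flipping a rectangle of spins -/

section Flip

open Finset
open scoped symmDiff

variable {L : ℕ}

/-- The configuration obtained from `σ` by flipping every spin in `S`. -/
def flipOn (S : Finset (Fin L × Fin L)) (σ : ConfigP L) : ConfigP L :=
  fun z => if z ∈ S then !σ z else σ z

/-- The defects of `σ`: the plaquettes on which `σ` has spin product `-1`. -/
def defects (σ : ConfigP L) : Finset (Fin L × Fin L) := {x | plaqP L σ x = -1}

/-- The energy difference caused by flipping the spin at `y`. -/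
def flipCost (σ : ConfigP L) (y : Fin L × Fin L) : ℝ := hamP L (flipP L σ y) - hamP L σ

lemma flipOn_empty (σ : ConfigP L) : flipOn ∅ σ = σ :=
  funext fun z => by simp [flipOn]

lemma flipOn_flipOn (S T : Finset (Fin L × Fin L)) (σ : ConfigP L) :
    flipOn S (flipOn T σ) = flipOn (S ∆ T) σ := by
  funext z
  by_cases hS : z ∈ S <;> by_cases hT : z ∈ T <;> simp [flipOn, mem_symmDiff, hS, hT]

lemma flipP_eq_flipOn (σ : ConfigP L) (y : Fin L × Fin L) :
    flipP L σ y = flipOn ({y.1} ×ˢ {y.2}) σ :=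
  funext fun z => by simp [flipP, flipOn, Prod.ext_iff]

lemma symmDiff_product (I J T : Finset (Fin L)) : (I ∆ J) ×ˢ T = (I ×ˢ T) ∆ (J ×ˢ T) := by
  ext z
  simp only [mem_symmDiff, mem_product]
  tauto

lemma flipP_flipOn_prod_singleton (I : Finset (Fin L)) (a r : Fin L) (σ : ConfigP L) :
    flipP L (flipOn (I ×ˢ {r}) σ) (a, r) = flipOn ((I ∆ {a}) ×ˢ {r}) σ := by
  rw [flipP_eq_flipOn, flipOn_flipOn, ← symmDiff_product, symmDiff_comm]

lemma sval_eq_one_or_neg_one (b : Bool) : sval b = 1 ∨ sval b = -1 := by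
  cases b <;> simp [sval]

lemma sval_not (b : Bool) : sval (!b) = -sval b := by
  cases b <;> simp [sval]

lemma plaqP_eq_one_or_neg_one (σ : ConfigP L) (x : Fin L × Fin L) :
    plaqP L σ x = 1 ∨ plaqP L σ x = -1 := by
  have hmul {u v : ℝ} (hu : u = 1 ∨ u = -1) (hv : v = 1 ∨ v = -1) : u * v = 1 ∨ u * v = -1 := by
    rcases hu with rfl | rfl <;> rcases hv with rfl | rfl <;> simp
  exact hmul (hmul (hmul (sval_eq_one_or_neg_one _) (sval_eq_one_or_neg_one _))
    (sval_eq_one_or_neg_one _)) (sval_eq_one_or_neg_one _)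

lemma mem_groundP_iff {σ : ConfigP L} : σ ∈ GroundP L ↔ ∀ x, plaqP L σ x = 1 := by
  have hle (η : ConfigP L) (x) : plaqP L η x ≤ 1 := by
    rcases plaqP_eq_one_or_neg_one η x with h | h <;> rw [h]; norm_num
  have hlow (η : ConfigP L) : ∑ x, plaqP L η x ≤ ∑ _x : Fin L × Fin L, (1 : ℝ) :=
    sum_le_sum fun x _ => hle η x
  constructor
  · intro hσ x
    have hup : ∑ x : Fin L × Fin L, plaqP L (fun _ => true) x ≤ ∑ x, plaqP L σ x := by
      have := hσ fun _ => true
      unfold hamP at this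
      linarith
    have hsum := (hlow σ).antisymm (by simpa [plaqP, sval] using hup)
    exact (sum_eq_sum_iff_of_le fun x _ => hle σ x).1 hsum x (mem_univ x)
  · intro hσ η
    have hη := hlow η
    simp_rw [hamP, hσ]
    linarith

variable [NeZero L]

lemma plaqP_flipOn_prod (I J : Finset (Fin L)) (σ : ConfigP L) (x : Fin L × Fin L) :
    plaqP L (flipOn (I ×ˢ J) σ) x =
      if x ∈ boundary I ×ˢ boundary J then -plaqP L σ x else plaqP L σ x := by
  simp only [plaqP, flipOn, fsucc_eq_add_one, mem_product, mem_boundary, apply_ite sval, sval_not]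
  by_cases hI : x.1 ∈ I <;> by_cases hI' : x.1 + 1 ∈ I <;> by_cases hJ : x.2 ∈ J <;>
    by_cases hJ' : x.2 + 1 ∈ J <;> simp [hI, hI', hJ, hJ']

lemma flipCost_eq_sum (σ : ConfigP L) (y : Fin L × Fin L) :
    flipCost σ y = ∑ x ∈ boundary {y.1} ×ˢ boundary {y.2}, plaqP L σ x := by
  have hdiff (x : Fin L × Fin L) : plaqP L σ x - plaqP L (flipP L σ y) x =
      if x ∈ boundary {y.1} ×ˢ boundary {y.2} then 2 * plaqP L σ x else 0 := by
    rw [flipP_eq_flipOn, plaqP_flipOn_prod]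
    split_ifs <;> ring
  calc flipCost σ y = 1 / 2 * ∑ x, (plaqP L σ x - plaqP L (flipP L σ y) x) := by
        rw [flipCost, hamP, hamP, sum_sub_distrib]
        ring
    _ = ∑ x ∈ boundary {y.1} ×ˢ boundary {y.2}, plaqP L σ x := by
        simp_rw [hdiff]
        rw [sum_ite_mem, univ_inter, ← mul_sum]
        ring

lemma flipOn_prod_mem_groundP {I J : Finset (Fin L)} {σ : ConfigP L} (hσ : σ ∈ GroundP L)
    (hI : boundary I = ∅) : flipOn (I ×ˢ J) σ ∈ GroundP L := by
  rw [mem_groundP_iff] at hσ ⊢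
  intro x
  rw [plaqP_flipOn_prod, hI, empty_product, if_neg (notMem_empty x), hσ x]

lemma plaqP_flipOn_prod_of_mem_groundP {σ : ConfigP L} (hσ : σ ∈ GroundP L)
    (I J : Finset (Fin L)) (x : Fin L × Fin L) :
    plaqP L (flipOn (I ×ˢ J) σ) x = if x ∈ boundary I ×ˢ boundary J then -1 else 1 := by
  rw [plaqP_flipOn_prod, mem_groundP_iff.1 hσ x]

lemma defects_flipOn_prod {σ : ConfigP L} (hσ : σ ∈ GroundP L) (I J : Finset (Fin L)) :
    defects (flipOn (I ×ˢ J) σ) = boundary I ×ˢ boundary J := by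
  ext x
  rw [defects, mem_filter_univ, plaqP_flipOn_prod_of_mem_groundP hσ]
  split_ifs with hx <;> norm_num [hx]

lemma card_boundary_prod (hL : 1 < L) (y : Fin L × Fin L) :
    #(boundary {y.1} ×ˢ boundary {y.2}) = 4 := by
  rw [card_product, card_boundary_singleton hL, card_boundary_singleton hL]

lemma flipCost_flipOn_prod (hL : 1 < L) {σ : ConfigP L} (hσ : σ ∈ GroundP L)
    (I J : Finset (Fin L)) (y : Fin L × Fin L) :
    flipCost (flipOn (I ×ˢ J) σ) y =
      4 - 2 * (#(boundary {y.1} ∩ boundary I) * #(boundary {y.2} ∩ boundary J) : ℕ) := by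
  have hplaq (x : Fin L × Fin L) : plaqP L (flipOn (I ×ˢ J) σ) x =
      1 - 2 * if x ∈ boundary I ×ˢ boundary J then 1 else 0 := by
    rw [plaqP_flipOn_prod_of_mem_groundP hσ]
    split_ifs <;> norm_num
  simp_rw [flipCost_eq_sum, hplaq]
  rw [sum_sub_distrib, ← mul_sum, sum_boole, filter_mem_eq_inter, product_inter_product, sum_const,
    card_boundary_prod hL, card_product]
  norm_num

lemma flipCost_of_mem_groundP (hL : 1 < L) {σ : ConfigP L} (hσ : σ ∈ GroundP L)
    (y : Fin L × Fin L) : flipCost σ y = 4 := by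
  rw [flipCost_eq_sum, sum_congr rfl fun x _ => mem_groundP_iff.1 hσ x, sum_const,
    card_boundary_prod hL]
  norm_num

lemma card_flipCost_lt_four_le (hL : 1 < L) (ζ : ConfigP L) :
    #{y | flipCost ζ y < 4} ≤ #(defects ζ) * 4 := by
  have hcover : ({y | flipCost ζ y < 4} : Finset (Fin L × Fin L)) ⊆
      (defects ζ).biUnion fun x => {x.1, x.1 + 1} ×ˢ {x.2, x.2 + 1} := by
    intro y hy
    rw [mem_filter_univ, flipCost_eq_sum] at hy
    obtain ⟨x, hx, hdef⟩ : ∃ x ∈ boundary {y.1} ×ˢ boundary {y.2}, plaqP L ζ x = -1 := by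
      by_contra! hne
      rw [sum_congr rfl fun x hx => (plaqP_eq_one_or_neg_one ζ x).resolve_right (hne x hx),
        sum_const, card_boundary_prod hL] at hy
      norm_num at hy
    rw [boundary_singleton hL, boundary_singleton hL] at hx
    simp only [mem_product, mem_insert, mem_singleton] at hx
    refine mem_biUnion.2 ⟨x, by simpa [defects] using hdef, ?_⟩
    simp only [mem_product, mem_insert, mem_singleton]
    rcases hx with ⟨h₁ | h₁, h₂ | h₂⟩ <;> simp [h₁, h₂]
  refine (card_le_card hcover).trans (card_biUnion_le_card_mul _ _ _ fun x _ => ?_)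
  rw [card_product]
  exact Nat.mul_le_mul card_le_two card_le_two

end Flip

/-! ### The classes `ℛ_k` -/

section Rk

open Finset
open scoped Fin.NatCast symmDiff

variable {L k : ℕ}

/-- Reflection of a configuration in the diagonal, which exchanges rows and columns. -/
def transposeP (σ : ConfigP L) : ConfigP L := fun z => σ z.swap

lemma plaqP_transposeP (σ : ConfigP L) (x : Fin L × Fin L) :
    plaqP L (transposeP σ) x = plaqP L σ x.swap := by
  simp only [plaqP, transposeP, Prod.swap]
  ring

lemma hamP_transposeP (σ : ConfigP L) : hamP L (transposeP σ) = hamP L σ := by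
  simp_rw [hamP, plaqP_transposeP]
  rw [← (Equiv.prodComm (Fin L) (Fin L)).sum_comp (plaqP L σ)]
  rfl

lemma flipP_transposeP (σ : ConfigP L) (y : Fin L × Fin L) :
    flipP L (transposeP σ) y = transposeP (flipP L σ y.swap) :=
  funext fun z => by simp [flipP, transposeP, Prod.swap_eq_iff_eq_swap]

lemma flipCost_transposeP (σ : ConfigP L) (y : Fin L × Fin L) :
    flipCost (transposeP σ) y = flipCost σ y.swap := by
  rw [flipCost, flipP_transposeP, hamP_transposeP, hamP_transposeP, flipCost]

lemma defects_transposeP (ζ : ConfigP L) :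
    defects (transposeP ζ) = (defects ζ).map (Equiv.prodComm _ _).toEmbedding := by
  ext x
  simp [defects, plaqP_transposeP]

lemma transposeP_mem_groundP {σ : ConfigP L} (hσ : σ ∈ GroundP L) :
    transposeP σ ∈ GroundP L := fun η => (hamP_transposeP σ).trans_le (hσ η)

lemma transposeP_mem_Rk {ζ : ConfigP L} (hζ : ζ ∈ Rk L k) : transposeP ζ ∈ Rk L k := by
  obtain ⟨σ, hσ, i, m, rfl | rfl⟩ := hζ
  · exact ⟨transposeP σ, transposeP_mem_groundP hσ, i, m, Or.inr rfl⟩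
  · exact ⟨transposeP σ, transposeP_mem_groundP hσ, i, m, Or.inl rfl⟩

variable [NeZero L]

lemma flipRowSeg_eq_flipOn (hk : k ≤ L) (σ : ConfigP L) (r m : Fin L) :
    flipRowSeg L σ r m k = flipOn (arc m k ×ˢ {r}) σ :=
  funext fun z => by
    simp only [flipRowSeg, flipOn, mem_product, mem_singleton, mem_arc_iff_exists hk, and_comm]

lemma flipOn_arc_mem_Rk {σ : ConfigP L} (hσ : σ ∈ GroundP L) (hk : k ≤ L) (m r : Fin L) :
    flipOn (arc m k ×ˢ {r}) σ ∈ Rk L k :=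
  ⟨σ, hσ, r, m, Or.inl (flipRowSeg_eq_flipOn hk σ r m).symm⟩

lemma Rk_subset_of_transposeP_mem {S : Set (ConfigP L)} (hk : k ≤ L)
    (htranspose : ∀ ζ ∈ S, transposeP ζ ∈ S)
    (hrow : ∀ σ ∈ GroundP L, ∀ m r, flipOn (arc m k ×ˢ {r}) σ ∈ S) : Rk L k ⊆ S := by
  rintro _ ⟨σ, hσ, i, m, rfl | rfl⟩
  · rw [flipRowSeg_eq_flipOn hk]
    exact hrow σ hσ m i
  · have hcol := htranspose _ (hrow _ (transposeP_mem_groundP hσ) m i)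
    rwa [← flipRowSeg_eq_flipOn hk] at hcol

lemma Rk_zero : Rk L 0 = GroundP L := by
  refine Set.Subset.antisymm (Rk_subset_of_transposeP_mem (Nat.zero_le L)
    (fun _ => transposeP_mem_groundP) fun σ hσ m r => ?_) fun σ hσ => ?_
  · rwa [arc_zero, empty_product, flipOn_empty]
  · simpa only [arc_zero, empty_product, flipOn_empty] using
      flipOn_arc_mem_Rk hσ (Nat.zero_le L) 0 0

lemma flipP_mem_Rk_one {σ : ConfigP L} (hσ : σ ∈ GroundP L) (y : Fin L × Fin L) :
    flipP L σ y ∈ Rk L 1 := by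
  rw [flipP_eq_flipOn, ← arc_one]
  exact flipOn_arc_mem_Rk hσ NeZero.one_le y.1 y.2

-- Flipping an arc amounts to flipping the complementary arc of the ground state in which the
-- whole row has been flipped.
lemma Rk_subset_Rk_sub (hk : k ≤ L) : Rk L k ⊆ Rk L (L - k) := by
  refine Rk_subset_of_transposeP_mem hk (fun _ => transposeP_mem_Rk) fun σ hσ m r => ?_
  have hrow : flipOn (univ ×ˢ {r}) σ ∈ GroundP L := flipOn_prod_mem_groundP hσ boundary_univ
  have hflip := flipOn_arc_mem_Rk hrow (Nat.sub_le L k) (m + (k : Fin L)) r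
  rwa [← compl_arc m hk, flipOn_flipOn, ← symmDiff_product, ← top_eq_univ,
    symmDiff_top, hnot_eq_compl, compl_compl] at hflip

lemma card_defects_le_four (hk : k + 1 < L) {ζ : ConfigP L} (hζ : ζ ∈ Rk L (k + 1)) :
    #(defects ζ) ≤ 4 := by
  have hsub : Rk L (k + 1) ⊆ {ζ | #(defects ζ) ≤ 4} := by
    refine Rk_subset_of_transposeP_mem hk.le (fun ζ hζ => ?_) fun σ hσ m r => ?_
    · rwa [Set.mem_ofPred_eq, defects_transposeP, card_map]
    · rw [Set.mem_ofPred_eq, defects_flipOn_prod hσ, card_product,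
        card_boundary_singleton (by omega)]
      linarith [card_boundary_arc_succ_le_two m hk]
  exact hsub hζ

end Rk

/-! ### Spin flips out of `ℛ_k` -/

section Moves

open Finset
open scoped Fin.NatCast symmDiff

variable {L k : ℕ}

/-- A classification of the spin flips available at a configuration `ζ` whose flipped arc has
length `k`: those in `U` lengthen the arc, those in `D` shorten it without raising the energy,
and all the others are suppressed by an energy cost of at least `2`. -/
structure ArcMoves (ζ : ConfigP L) (k : ℕ) (U D : Finset (Fin L × Fin L)) : Prop where
  grow : ∀ y ∈ U, flipP L ζ y ∈ Rk L (k + 1)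
  shrink : ∀ y ∈ D, flipP L ζ y ∈ Rk L (k - 1)
  flipCost_nonpos : ∀ y ∈ D, flipCost ζ y ≤ 0
  two_le_flipCost : ∀ y ∉ U, y ∉ D → 2 ≤ flipCost ζ y

lemma ArcMoves.transposeP {ζ : ConfigP L} {U D : Finset (Fin L × Fin L)}
    (h : ArcMoves ζ k U D) :
    ArcMoves (transposeP ζ) k (U.map (Equiv.prodComm _ _).toEmbedding)
      (D.map (Equiv.prodComm _ _).toEmbedding) where
  grow y hy := by
    rw [flipP_transposeP]
    exact transposeP_mem_Rk (h.grow _ (by simpa using hy))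
  shrink y hy := by
    rw [flipP_transposeP]
    exact transposeP_mem_Rk (h.shrink _ (by simpa using hy))
  flipCost_nonpos y hy := by
    rw [flipCost_transposeP]
    exact h.flipCost_nonpos _ (by simpa using hy)
  two_le_flipCost y hU hD := by
    rw [flipCost_transposeP]
    exact h.two_le_flipCost _ (by simpa using hU) (by simpa using hD)

variable [NeZero L] {σ : ConfigP L}

lemma flipP_arc_mem_Rk_succ (hσ : σ ∈ GroundP L) (hk : k < L) {a m : Fin L} (r : Fin L)
    (ha : a = m - 1 ∨ a = m + (k : Fin L)) :
    flipP L (flipOn (arc m k ×ˢ {r}) σ) (a, r) ∈ Rk L (k + 1) := by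
  rw [flipP_flipOn_prod_singleton]
  rcases ha with rfl | rfl
  · rw [arc_symmDiff_sub_one m hk]
    exact flipOn_arc_mem_Rk hσ hk _ _
  · rw [arc_symmDiff_add m hk]
    exact flipOn_arc_mem_Rk hσ hk _ _

lemma flipP_arc_succ_mem_Rk (hσ : σ ∈ GroundP L) (hk : k < L) {a m : Fin L} (r : Fin L)
    (ha : a = m ∨ a = m + (k : Fin L)) :
    flipP L (flipOn (arc m (k + 1) ×ˢ {r}) σ) (a, r) ∈ Rk L k := by
  rw [flipP_flipOn_prod_singleton]
  rcases ha with rfl | rfl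
  · rw [arc_succ_symmDiff_first _ hk]
    exact flipOn_arc_mem_Rk hσ hk.le _ _
  · rw [arc_succ_symmDiff_last m hk]
    exact flipOn_arc_mem_Rk hσ hk.le _ _

lemma flipCost_arc_succ_nonpos (hσ : σ ∈ GroundP L) (hk : k + 1 < L) {a m : Fin L} (r : Fin L)
    (ha : a = m ∨ a = m + (k : Fin L)) :
    flipCost (flipOn (arc m (k + 1) ×ˢ {r}) σ) (a, r) ≤ 0 := by
  have hcommon : (boundary {a} ∩ boundary (arc m (k + 1))).Nonempty := by
    rcases ha with rfl | rfl
    · exact ⟨a - 1, mem_inter.2 ⟨by simp [boundary_singleton (by omega : 1 < L)],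
        (sub_one_mem_boundary_arc_succ hk).2 (Or.inl rfl)⟩⟩
    · exact ⟨_, mem_inter.2 ⟨by simp [boundary_singleton (by omega : 1 < L)],
        (mem_boundary_arc_succ hk).2 (Or.inr rfl)⟩⟩
  have hcard : (1 : ℝ) ≤ #(boundary {a} ∩ boundary (arc m (k + 1))) :=
    Nat.one_le_cast.2 hcommon.card_pos
  rw [flipCost_flipOn_prod (by omega) hσ, inter_self, card_boundary_singleton (by omega)]
  push_cast
  linarith

lemma two_le_flipCost_of_card_mul_card_le_one (hL : 1 < L) (hσ : σ ∈ GroundP L)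
    {I J : Finset (Fin L)} {y : Fin L × Fin L}
    (h : #(boundary {y.1} ∩ boundary I) * #(boundary {y.2} ∩ boundary J) ≤ 1) :
    2 ≤ flipCost (flipOn (I ×ˢ J) σ) y := by
  rw [flipCost_flipOn_prod hL hσ]
  have hcast := (Nat.cast_le (α := ℝ)).2 h
  push_cast at hcast ⊢
  linarith

lemma flipP_flipP_row_mem_Rk_two (hσ : σ ∈ GroundP L) (hL : 1 < L) {a m : Fin L} (r : Fin L)
    (ha : a = m - 1 ∨ a = m + 1) : flipP L (flipP L σ (m, r)) (a, r) ∈ Rk L 2 := by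
  rw [flipP_eq_flipOn σ, ← arc_one]
  exact flipP_arc_mem_Rk_succ hσ hL r (by rwa [Nat.cast_one])

lemma flipP_flipP_col_mem_Rk_two (hσ : σ ∈ GroundP L) (hL : 1 < L) (m : Fin L) {b r : Fin L}
    (hb : b = r - 1 ∨ b = r + 1) : flipP L (flipP L σ (m, r)) (m, b) ∈ Rk L 2 := by
  have hrow := flipP_flipP_row_mem_Rk_two (transposeP_mem_groundP hσ) hL m hb
  rw [flipP_transposeP, flipP_transposeP] at hrow
  exact transposeP_mem_Rk hrow

lemma arcMoves_flipP (hσ : σ ∈ GroundP L) (hL : 2 < L) (m r : Fin L) :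
    ArcMoves (flipP L σ (m, r)) 1 ({m - 1, m + 1} ×ˢ {r} ∪ {m} ×ˢ {r - 1, r + 1})
      ({m} ×ˢ {r}) where
  grow y hy := by
    simp only [mem_union, mem_product, mem_insert, mem_singleton] at hy
    rcases hy with ⟨ha, rfl⟩ | ⟨rfl, hb⟩
    · exact flipP_flipP_row_mem_Rk_two hσ (by omega) y.2 ha
    · exact flipP_flipP_col_mem_Rk_two hσ (by omega) y.1 hb
  shrink y hy := by
    simp only [mem_product, mem_singleton] at hy
    obtain ⟨rfl, rfl⟩ := hy
    rw [flipP_eq_flipOn σ, ← arc_one]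
    exact flipP_arc_succ_mem_Rk hσ (by omega) y.2 (Or.inl rfl)
  flipCost_nonpos y hy := by
    simp only [mem_product, mem_singleton] at hy
    obtain ⟨rfl, rfl⟩ := hy
    rw [flipP_eq_flipOn σ, ← arc_one]
    exact flipCost_arc_succ_nonpos hσ (by omega) y.2 (Or.inl rfl)
  two_le_flipCost y hU hD := by
    simp only [mem_union, mem_product, mem_singleton] at hU hD
    rw [flipP_eq_flipOn]
    apply two_le_flipCost_of_card_mul_card_le_one (by omega) hσ
    by_cases ha : y.1 = m
    · rw [card_boundary_singleton_inter_eq_zero (by omega : 1 < L) (a := y.2) (by tauto)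
        (by tauto), mul_zero]
      exact Nat.zero_le 1
    by_cases hb : y.2 = r
    · rw [card_boundary_singleton_inter_eq_zero (by omega : 1 < L) (a := y.1) (by tauto)
        (by tauto), zero_mul]
      exact Nat.zero_le 1
    · exact Nat.mul_le_mul (card_boundary_singleton_inter_le_one hL ha)
        (card_boundary_singleton_inter_le_one hL hb)

lemma arcMoves_flipOn_arc (hσ : σ ∈ GroundP L) (hk : 1 ≤ k) (hkL : k + 2 < L) (m r : Fin L) :
    ArcMoves (flipOn (arc m (k + 1) ×ˢ {r}) σ) (k + 1)
      ({m - 1, m + ((k + 1 : ℕ) : Fin L)} ×ˢ {r}) ({m, m + (k : Fin L)} ×ˢ {r}) where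
  grow y hy := by
    simp only [mem_product, mem_insert, mem_singleton] at hy
    obtain ⟨ha, hb⟩ := hy
    exact hb ▸ flipP_arc_mem_Rk_succ hσ (by omega) y.2 ha
  shrink y hy := by
    simp only [mem_product, mem_insert, mem_singleton] at hy
    obtain ⟨ha, hb⟩ := hy
    exact hb ▸ flipP_arc_succ_mem_Rk hσ (by omega) y.2 ha
  flipCost_nonpos y hy := by
    simp only [mem_product, mem_insert, mem_singleton] at hy
    obtain ⟨ha, hb⟩ := hy
    exact hb ▸ flipCost_arc_succ_nonpos hσ (by omega) y.2 ha
  two_le_flipCost y hU hD := by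
    apply two_le_flipCost_of_card_mul_card_le_one (by omega) hσ
    by_cases hb : y.2 = r
    · rw [card_boundary_singleton_inter_arc_eq_zero (by omega)
        (fun h => hU (mem_product.2 ⟨h, mem_singleton.2 hb⟩))
        (fun h => hD (mem_product.2 ⟨h, mem_singleton.2 hb⟩)), zero_mul]
      exact Nat.zero_le 1
    · exact Nat.mul_le_mul (card_boundary_singleton_inter_arc_le_one hkL (by omega))
        (card_boundary_singleton_inter_le_one (by omega) hb)

lemma exists_arcMoves_of_row {u d : ℕ} (hk : k ≤ L)
    (hrow : ∀ σ ∈ GroundP L, ∀ m r, ∃ U D,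
      #U ≤ u ∧ #D = d ∧ ArcMoves (flipOn (arc m k ×ˢ {r}) σ) k U D) :
    Rk L k ⊆ {ζ | ∃ U D, #U ≤ u ∧ #D = d ∧ ArcMoves ζ k U D} := by
  refine Rk_subset_of_transposeP_mem hk ?_ hrow
  rintro ζ ⟨U, D, hU, hD, h⟩
  exact ⟨_, _, by rwa [card_map], by rwa [card_map], h.transposeP⟩

lemma exists_arcMoves_one (hL : 2 < L) {ζ : ConfigP L} (hζ : ζ ∈ Rk L 1) :
    ∃ U D, #U ≤ 4 ∧ #D = 1 ∧ ArcMoves ζ 1 U D := by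
  refine exists_arcMoves_of_row (by omega) (fun σ hσ m r => ?_) hζ
  rw [arc_one, ← flipP_eq_flipOn σ (m, r)]
  refine ⟨_, _, (card_union_le _ _).trans ?_, by simp, arcMoves_flipP hσ hL m r⟩
  simp only [card_product, card_singleton, mul_one, one_mul]
  exact add_le_add card_le_two card_le_two

lemma exists_arcMoves_succ (hk : 1 ≤ k) (hkL : k + 2 < L) {ζ : ConfigP L}
    (hζ : ζ ∈ Rk L (k + 1)) : ∃ U D, #U ≤ 2 ∧ #D = 2 ∧ ArcMoves ζ (k + 1) U D := by
  refine exists_arcMoves_of_row (by omega) (fun σ hσ m r => ?_) hζ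
  have hne : m ≠ m + (k : Fin L) := fun h => by
    rw [eq_add_natCast_iff (by omega), sub_self, Fin.val_zero] at h
    omega
  refine ⟨_, _, ?_, ?_, arcMoves_flipOn_arc hσ hk hkL m r⟩ <;>
    rw [card_product, card_singleton, mul_one]
  · exact card_le_two
  · exact card_pair hne

end Moves

/-! ### The generator and its killed version -/

section Generator

open Finset
open scoped Matrix

variable {L k : ℕ} {β : ℝ} {σ η ζ : ConfigP L} {U D : Finset (Fin L × Fin L)}

lemma metroRateP_nonneg : 0 ≤ metroRateP L β σ η := le_min zero_le_one (Real.exp_pos _).le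

lemma metroRateP_le_one : metroRateP L β σ η ≤ 1 := min_le_left _ _

lemma metroRateP_flipP_of_flipCost_nonpos {y : Fin L × Fin L} (hβ : 0 ≤ β)
    (h : flipCost ζ y ≤ 0) : metroRateP L β ζ (flipP L ζ y) = 1 :=
  min_eq_left (Real.one_le_exp (mul_nonneg_of_nonpos_of_nonpos (neg_nonpos.2 hβ) h))

lemma metroRateP_flipP_le_exp_pow {y : Fin L × Fin L} (hβ : 0 ≤ β) (j : ℕ)
    (h : 2 * j ≤ flipCost ζ y) :
    metroRateP L β ζ (flipP L ζ y) ≤ Real.exp (-2 * β) ^ j := by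
  rw [← Real.exp_nat_mul]
  refine (min_le_right _ _).trans (Real.exp_le_exp.2 ?_)
  change -β * flipCost ζ y ≤ _
  linarith [mul_le_mul_of_nonneg_left h hβ]

lemma flipP_ne (ζ : ConfigP L) (y : Fin L × Fin L) : flipP L ζ y ≠ ζ := fun h => by
  simpa [flipP] using congrFun h y

lemma genP_mulVec_apply (L : ℕ) (β : ℝ) (φ : ConfigP L → ℝ) (ζ : ConfigP L) :
    (genP L β *ᵥ φ) ζ =
      ∑ y, metroRateP L β ζ (flipP L ζ y) * (φ (flipP L ζ y) - φ ζ) := by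
  have hentry (η : ConfigP L) : genP L β ζ η =
      (∑ y, if η = flipP L ζ y then metroRateP L β ζ (flipP L ζ y) else 0) -
        if η = ζ then ∑ y, metroRateP L β ζ (flipP L ζ y) else 0 := by
    by_cases hη : η = ζ
    · subst hη
      simp [genP, fun y => (flipP_ne η y).symm]
    · simp [genP, hη]
  simp only [Matrix.mulVec, dotProduct, hentry, sub_mul, sum_sub_distrib, sum_mul, ite_mul,
    zero_mul, mul_sub]
  rw [sum_comm]
  simp [sum_ite_eq']

lemma killedGen_mulVec_indicator (L : ℕ) (β : ℝ) (f : ConfigP L → ℝ) :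
    killedGen L β *ᵥ (Rset L).indicator f =
      (Rset L).indicator (genP L β *ᵥ (Rset L).indicator f) := by
  funext ζ
  by_cases hζ : ζ ∈ Rset L
  · rw [Set.indicator_of_mem hζ]
    refine sum_congr rfl fun η _ => ?_
    by_cases hη : η ∈ Rset L <;> simp [killedGen, hζ, hη]
  · rw [Set.indicator_of_notMem hζ]
    exact sum_eq_zero fun η _ => by simp [killedGen, hζ]

lemma killedGen_apply_nonneg (h : σ ≠ η) : 0 ≤ killedGen L β σ η := by
  unfold killedGen genP
  split_ifs with _ hησ
  · exact absurd hησ.symm h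
  · exact sum_nonneg fun y _ => ite_nonneg metroRateP_nonneg le_rfl
  · exact le_rfl

lemma killedGen_mulVec_indicator_one_nonpos (L : ℕ) (β : ℝ) :
    killedGen L β *ᵥ (Rset L).indicator 1 ≤ 0 := by
  rw [killedGen_mulVec_indicator]
  refine Set.indicator_nonpos fun ζ hζ => ?_
  rw [genP_mulVec_apply, Set.indicator_of_mem hζ]
  exact sum_nonpos fun y _ => mul_nonpos_of_nonneg_of_nonpos metroRateP_nonneg <|
    sub_nonpos.2 <| Set.indicator_le_self' (fun _ _ => zero_le_one) _

lemma ArcMoves.le_genP_mulVec (h : ArcMoves ζ k U D) (hβ : 0 ≤ β) {φ : ConfigP L → ℝ} {u d : ℝ}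
    (hu : 0 ≤ u) (hU : ∀ y ∈ U, -u ≤ φ (flipP L ζ y) - φ ζ)
    (hD : ∀ y ∈ D, d ≤ φ (flipP L ζ y) - φ ζ) (hφ : ∀ y, -1 ≤ φ (flipP L ζ y) - φ ζ) :
    #D * d - #U * u - ∑ y with y ∉ U ∧ y ∉ D, metroRateP L β ζ (flipP L ζ y) ≤
      (genP L β *ᵥ φ) ζ := by
  have hsplit : #D * d - #U * u - ∑ y with y ∉ U ∧ y ∉ D, metroRateP L β ζ (flipP L ζ y) =
      ∑ y, ((if y ∈ D then d else 0) - (if y ∈ U then u else 0) -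
        if y ∉ U ∧ y ∉ D then metroRateP L β ζ (flipP L ζ y) else 0) := by
    simp [sum_sub_distrib, sum_ite_mem, sum_filter]
  rw [hsplit, genP_mulVec_apply]
  refine sum_le_sum fun y _ => ?_
  have hnonneg := metroRateP_nonneg (β := β) (σ := ζ) (η := flipP L ζ y)
  have hle_one := metroRateP_le_one (β := β) (σ := ζ) (η := flipP L ζ y)
  by_cases hyD : y ∈ D
  · have hd := hD y hyD
    rw [metroRateP_flipP_of_flipCost_nonpos hβ (h.flipCost_nonpos y hyD)]
    by_cases hyU : y ∈ U <;> simp [hyD, hyU] <;> linarith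
  by_cases hyU : y ∈ U
  · have hu' := hU y hyU
    simp only [hyD, hyU, if_true, if_false, not_true, false_and]
    nlinarith
  · have hone := hφ y
    simp only [hyD, hyU, if_false, not_false_iff, and_self, if_true]
    nlinarith

lemma ArcMoves.sum_metroRateP_le [NeZero L] (h : ArcMoves ζ k U D) (hβ : 0 ≤ β) (hL : 1 < L)
    (hζ : #(defects ζ) ≤ 4) :
    ∑ y with y ∉ U ∧ y ∉ D, metroRateP L β ζ (flipP L ζ y) ≤
      16 * Real.exp (-2 * β) + L ^ 2 * Real.exp (-2 * β) ^ 2 := by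
  set q := Real.exp (-2 * β)
  have hq : 0 ≤ q := (Real.exp_pos _).le
  have hrate (y : Fin L × Fin L) (hy : y ∉ U ∧ y ∉ D) :
      metroRateP L β ζ (flipP L ζ y) ≤ (if flipCost ζ y < 4 then q else 0) + q ^ 2 := by
    split_ifs with hcost
    · have hle := metroRateP_flipP_le_exp_pow hβ 1
        (by simpa using h.two_le_flipCost y hy.1 hy.2)
      rw [pow_one] at hle
      linarith [sq_nonneg q]
    · rw [zero_add]
      exact metroRateP_flipP_le_exp_pow hβ 2 (by push_cast; linarith)
  have hlow : (#{y | flipCost ζ y < 4} : ℝ) ≤ 16 := by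
    have := card_flipCost_lt_four_le hL ζ
    exact_mod_cast (by omega : #{y | flipCost ζ y < 4} ≤ 16)
  calc ∑ y with y ∉ U ∧ y ∉ D, metroRateP L β ζ (flipP L ζ y)
      ≤ ∑ y with y ∉ U ∧ y ∉ D, ((if flipCost ζ y < 4 then q else 0) + q ^ 2) :=
        sum_le_sum fun y hy => hrate y (by simpa using hy)
    _ ≤ ∑ y, ((if flipCost ζ y < 4 then q else 0) + q ^ 2) :=
        sum_le_univ_sum_of_nonneg fun y => by positivity
    _ = #{y | flipCost ζ y < 4} * q + L ^ 2 * q ^ 2 := by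
        rw [sum_add_distrib, ← sum_filter, sum_const, sum_const, card_univ, Fintype.card_prod,
          Fintype.card_fin, nsmul_eq_mul, nsmul_eq_mul, Nat.cast_mul, ← sq]
    _ ≤ 16 * q + L ^ 2 * q ^ 2 := by
        linarith [mul_le_mul_of_nonneg_right hlow hq]

end Generator

/-! ### The Lyapunov function -/

section Barrier

open Finset
open scoped Matrix

variable {L k : ℕ} {β : ℝ} {σ ζ : ConfigP L} {U D : Finset (Fin L × Fin L)}

/-- The length of a shortest arc whose flip produces `ζ` from a ground state. -/
def segLength (ζ : ConfigP L) : ℕ := sInf {k | ζ ∈ Rk L k}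

/-- The Lyapunov function on arc lengths. It is concave on `[1, L]`, which balances the equal rates
of lengthening and shortening, and the jump at `0` compensates for the four flips that lengthen an
arc of length one, against a single one that removes it. -/
def potential (L k : ℕ) : ℝ := if k = 0 then 0 else k * (2 * L - k) + 6 * L

/-- A subsolution for the killed generator which equals `1` on the ground states. The factor
`5 * exp (-2 * β)` makes the drift of `potential` outweigh the rate of leaving `ℛ`. -/
def barrier (L : ℕ) (β : ℝ) : ConfigP L → ℝ :=
  (Rset L).indicator fun ζ => 1 - 5 * Real.exp (-2 * β) * potential L (segLength ζ)

lemma segLength_le (h : ζ ∈ Rk L k) : segLength ζ ≤ k := Nat.sInf_le h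

lemma mem_Rk_segLength (h : ζ ∈ Rset L) : ζ ∈ Rk L (segLength ζ) := by
  obtain ⟨k, _, hk⟩ := h
  exact Nat.sInf_mem (s := {k | ζ ∈ Rk L k}) ⟨k, hk⟩

lemma two_mul_segLength_le [NeZero L] (h : ζ ∈ Rset L) : 2 * segLength ζ ≤ L := by
  obtain ⟨k, hkL, hk⟩ := h
  have hle := segLength_le hk
  have hle' := segLength_le (Rk_subset_Rk_sub hkL hk)
  omega

lemma potential_zero : potential L 0 = 0 := if_pos rfl

lemma potential_succ (L k : ℕ) :
    potential L (k + 1) = (k + 1) * (2 * L - (k + 1)) + 6 * L := by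
  simp [potential]

lemma potential_mono {j : ℕ} (hjk : j ≤ k) (hk : k ≤ L) : potential L j ≤ potential L k := by
  have hkL : (k : ℝ) ≤ L := Nat.cast_le.2 hk
  have hjk' : (j : ℝ) ≤ k := Nat.cast_le.2 hjk
  rcases j.eq_zero_or_pos with rfl | hj
  · rw [potential_zero, potential]
    split_ifs
    · exact le_rfl
    · nlinarith [(Nat.cast_nonneg k : (0 : ℝ) ≤ k)]
  · rw [potential, potential, if_neg (by omega), if_neg (by omega)]
    nlinarith

lemma potential_nonneg (hk : k ≤ L) : 0 ≤ potential L k :=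
  potential_zero.symm.trans_le (potential_mono (Nat.zero_le k) hk)

lemma potential_le [NeZero L] (hk : k ≤ L) : potential L k ≤ 7 * L ^ 2 := by
  have hL : (1 : ℝ) ≤ L := Nat.one_le_cast.2 NeZero.one_le
  refine (potential_mono hk le_rfl).trans ?_
  rw [potential, if_neg (NeZero.ne L)]
  nlinarith

lemma barrier_of_mem (h : ζ ∈ Rset L) :
    barrier L β ζ = 1 - 5 * Real.exp (-2 * β) * potential L (segLength ζ) :=
  Set.indicator_of_mem h _

lemma barrier_of_mem_groundP [NeZero L] (hσ : σ ∈ GroundP L) : barrier L β σ = 1 := by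
  rw [← Rk_zero] at hσ
  rw [barrier_of_mem ⟨0, Nat.zero_le L, hσ⟩, Nat.le_zero.1 (segLength_le hσ), potential_zero,
    mul_zero, sub_zero]

lemma le_barrier_of_mem_Rk (hk : k ≤ L) (h : ζ ∈ Rk L k) :
    1 - 5 * Real.exp (-2 * β) * potential L k ≤ barrier L β ζ := by
  rw [barrier_of_mem ⟨k, hk, h⟩]
  gcongr
  exact potential_mono (segLength_le h) hk

lemma barrier_le_indicator_one [NeZero L] : barrier L β ≤ (Rset L).indicator 1 := fun ζ =>
  Set.indicator_le_indicator' fun hζ => by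
    have hpot := potential_nonneg (by linarith [two_mul_segLength_le hζ] : segLength ζ ≤ L)
    exact sub_le_self 1 (by positivity)

lemma barrier_le_one [NeZero L] (ζ : ConfigP L) : barrier L β ζ ≤ 1 :=
  (barrier_le_indicator_one ζ).trans (Set.indicator_le_self' (fun _ _ => zero_le_one) ζ)

lemma barrier_nonneg [NeZero L] (hscale : 35 * L ^ 2 * Real.exp (-2 * β) ≤ 1)
    (ζ : ConfigP L) : 0 ≤ barrier L β ζ := by
  refine Set.indicator_nonneg (fun ζ hζ => ?_) ζ
  have hpot := potential_le (by linarith [two_mul_segLength_le hζ] : segLength ζ ≤ L)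
  have hle := mul_le_mul_of_nonneg_left hpot (by positivity : 0 ≤ 5 * Real.exp (-2 * β))
  linarith

lemma ArcMoves.genP_mulVec_barrier_nonneg [NeZero L] (h : ArcMoves ζ (k + 1) U D)
    (hβ : 0 ≤ β) (hscale : 35 * L ^ 2 * Real.exp (-2 * β) ≤ 1) (hk : k + 2 ≤ L)
    (hζ : ζ ∈ Rset L) (hlen : segLength ζ = k + 1)
    (hdrift : 4 ≤ #D * (potential L (k + 1) - potential L k) -
      #U * (potential L (k + 2) - potential L (k + 1))) :
    0 ≤ (genP L β *ᵥ barrier L β) ζ := by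
  have hleave := h.sum_metroRateP_le hβ (by omega)
    (card_defects_le_four (by omega) (hlen ▸ mem_Rk_segLength hζ))
  have hval := barrier_of_mem (β := β) hζ
  rw [hlen] at hval
  set q := Real.exp (-2 * β)
  have hq : 0 < q := Real.exp_pos _
  have hmono := sub_nonneg.2 (potential_mono (Nat.le_succ (k + 1)) hk)
  have hgen := h.le_genP_mulVec hβ (φ := barrier L β)
    (u := 5 * q * (potential L (k + 2) - potential L (k + 1)))
    (d := 5 * q * (potential L (k + 1) - potential L k)) (by positivity)
    (fun y hy => by linarith [le_barrier_of_mem_Rk (β := β) hk (h.grow y hy)])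
    (fun y hy => by linarith [le_barrier_of_mem_Rk (β := β) (k := k) (by omega) (h.shrink y hy)])
    (fun y => by linarith [barrier_le_one (β := β) ζ, barrier_nonneg hscale (flipP L ζ y)])
  have hgain := mul_le_mul_of_nonneg_left hdrift (by positivity : 0 ≤ 5 * q)
  have hfar : L ^ 2 * q ^ 2 ≤ q := by nlinarith
  linarith

lemma genP_mulVec_barrier_nonneg [NeZero L] (hL : 4 ≤ L)
    (hβ : 0 ≤ β) (hscale : 35 * L ^ 2 * Real.exp (-2 * β) ≤ 1) (hζ : ζ ∈ Rset L)
    (hground : ζ ∉ GroundP L) : 0 ≤ (genP L β *ᵥ barrier L β) ζ := by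
  have hmem := mem_Rk_segLength hζ
  have hhalf := two_mul_segLength_le hζ
  have hL' : (4 : ℝ) ≤ L := Nat.ofNat_le_cast.2 hL
  rcases hlen : segLength ζ with _ | _ | k <;> rw [hlen] at hmem hhalf
  · rw [Rk_zero] at hmem
    exact absurd hmem hground
  · obtain ⟨U, D, hU, hD, hmoves⟩ := exists_arcMoves_one (by omega) hmem
    refine hmoves.genP_mulVec_barrier_nonneg hβ hscale (by omega) hζ hlen ?_
    have hU' : (#U : ℝ) ≤ 4 := Nat.cast_le_ofNat.2 hU
    rw [hD, potential_succ, potential_succ, potential_zero]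
    push_cast
    nlinarith
  · obtain ⟨U, D, hU, hD, hmoves⟩ := exists_arcMoves_succ (by omega) (by omega) hmem
    refine hmoves.genP_mulVec_barrier_nonneg hβ hscale (by omega) hζ hlen ?_
    have hU' : (#U : ℝ) ≤ 2 := Nat.cast_le_ofNat.2 hU
    have hhalf' : 2 * ((k : ℝ) + 2) ≤ L := by exact_mod_cast hhalf
    rw [hD, potential_succ, potential_succ, potential_succ]
    push_cast
    nlinarith

lemma neg_le_genP_mulVec_barrier_of_mem_groundP [NeZero L] (hL : 1 < L) (hβ : 0 ≤ β)
    (hσ : σ ∈ GroundP L) :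
    -(40 * L ^ 3 * Real.exp (-2 * β) ^ 3) ≤ (genP L β *ᵥ barrier L β) σ := by
  set q := Real.exp (-2 * β)
  have hq : 0 < q := Real.exp_pos _
  have hterm (y : Fin L × Fin L) : -(q ^ 2 * (5 * q * (8 * L))) ≤
      metroRateP L β σ (flipP L σ y) * (barrier L β (flipP L σ y) - barrier L β σ) := by
    have hrate := metroRateP_flipP_le_exp_pow (ζ := σ) (y := y) hβ 2
      (by rw [flipCost_of_mem_groundP hL hσ]; norm_num)
    have hfall : -(5 * q * (8 * L)) ≤ barrier L β (flipP L σ y) - barrier L β σ := by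
      have hlow := le_barrier_of_mem_Rk (β := β) hL.le (flipP_mem_Rk_one hσ y)
      rw [potential_succ] at hlow
      rw [barrier_of_mem_groundP hσ]
      push_cast at hlow
      linarith
    calc -(q ^ 2 * (5 * q * (8 * L)))
        ≤ metroRateP L β σ (flipP L σ y) * -(5 * q * (8 * L)) := by
          rw [mul_neg]
          gcongr
      _ ≤ _ := mul_le_mul_of_nonneg_left hfall metroRateP_nonneg
  rw [genP_mulVec_apply]
  have hsum := card_nsmul_le_sum univ _ _ fun y _ => hterm y
  rw [card_univ, Fintype.card_prod, Fintype.card_fin, nsmul_eq_mul, Nat.cast_mul] at hsum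
  linarith

end Barrier

/-! ### Escape probability -/

section Escape

open scoped Matrix Matrix.Norms.Operator

lemma nonneg_of_mul_sq_mul_exp_le {L : ℕ} [NeZero L] {β : ℝ}
    (hscale : 35 * L ^ 2 * Real.exp (-2 * β) ≤ 1) : 0 ≤ β := by
  have hL : (1 : ℝ) ≤ L := Nat.one_le_cast.2 NeZero.one_le
  have hexp : Real.exp (-2 * β) ≤ 1 := by nlinarith [Real.exp_pos (-2 * β)]
  linarith [Real.exp_le_one_iff.1 hexp]

lemma neg_smul_indicator_le_killedGen_mulVec_barrier {L : ℕ} [NeZero L] (hL : 4 ≤ L) {β : ℝ}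
    (hscale : 35 * L ^ 2 * Real.exp (-2 * β) ≤ 1) :
    -((40 * L ^ 3 * Real.exp (-2 * β) ^ 3) • (Rset L).indicator 1) ≤
      killedGen L β *ᵥ barrier L β := by
  have hβ := nonneg_of_mul_sq_mul_exp_le hscale
  have hkill := killedGen_mulVec_indicator L β
    fun ζ => 1 - 5 * Real.exp (-2 * β) * potential L (segLength ζ)
  change killedGen L β *ᵥ barrier L β = (Rset L).indicator (genP L β *ᵥ barrier L β) at hkill
  rw [hkill]
  intro ζ
  by_cases hζ : ζ ∈ Rset L
  · simp only [Pi.neg_apply, Pi.smul_apply, Set.indicator_of_mem hζ, Pi.one_apply, smul_eq_mul,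
      mul_one]
    by_cases hground : ζ ∈ GroundP L
    · exact neg_le_genP_mulVec_barrier_of_mem_groundP (by omega) hβ hground
    · exact (neg_nonpos.2 (by positivity)).trans
        (genP_mulVec_barrier_nonneg hL hβ hscale hζ hground)
  · simp [hζ]

theorem no_escape_from_R_general {L : ℕ} (hL : 4 ≤ L) {β t : ℝ} (ht : 0 ≤ t)
    (hscale : 35 * L ^ 2 * Real.exp (-2 * β) ≤ 1) {σ : ConfigP L} (hσ : σ ∈ GroundP L) :
    1 - (mexp (t • killedGen L β) *ᵥ (fun η => if η ∈ Rset L then 1 else 0)) σ ≤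
      40 * L ^ 3 * Real.exp (-2 * β) ^ 3 * t := by
  have : NeZero L := ⟨by omega⟩
  have hbound := sub_smul_le_exp_smul_mulVec (fun _ _ => killedGen_apply_nonneg) (by positivity) ht
    barrier_le_indicator_one (killedGen_mulVec_indicator_one_nonpos L β)
    (neg_smul_indicator_le_killedGen_mulVec_barrier hL hscale) σ
  have hmem : σ ∈ Rset L := ⟨0, Nat.zero_le L, by rwa [Rk_zero]⟩
  have hind : (fun η => if η ∈ Rset L then (1 : ℝ) else 0) = (Rset L).indicator 1 :=
    funext fun η => by simp [Set.indicator_apply]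
  rw [mexp_eq_exp, hind]
  simp only [Pi.sub_apply, Pi.smul_apply, barrier_of_mem_groundP hσ, Set.indicator_of_mem hmem,
    Pi.one_apply, smul_eq_mul, mul_one] at hbound
  linarith

end Escape

/-! ### The critical length scale -/

section CriticalLength

variable {β : ℝ}

lemma Lc_le_exp (β : ℝ) : (Lc β : ℝ) ≤ Real.exp (β / 2) := Nat.floor_le (Real.exp_pos _).le

lemma four_le_Lc (hβ : 6 ≤ β) : 4 ≤ Lc β :=
  Nat.le_floor <| by
    push_cast
    linarith [Real.add_one_le_exp (β / 2)]

lemma Lc_sq_mul_exp_le (hβ : 34 ≤ β) : 35 * (Lc β : ℝ) ^ 2 * Real.exp (-2 * β) ≤ 1 :=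
  calc 35 * (Lc β : ℝ) ^ 2 * Real.exp (-2 * β)
      ≤ Real.exp β * Real.exp (β / 2) ^ 2 * Real.exp (-2 * β) := by
        gcongr
        · linarith [Real.add_one_le_exp β]
        · exact Lc_le_exp β
    _ = 1 := by
        rw [← Real.exp_nat_mul, ← Real.exp_add, ← Real.exp_add, Real.exp_eq_one_iff]
        push_cast
        ring

lemma sq_le_exp_div_four (hβ : 0 ≤ β) : β ^ 2 ≤ 32 * Real.exp (β / 4) := by
  linarith [Real.quadratic_le_exp_of_nonneg (by positivity : 0 ≤ β / 4)]

lemma Lc_cube_mul_exp_mul_le (hβ : 0 ≤ β) :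
    40 * (Lc β : ℝ) ^ 3 * Real.exp (-2 * β) ^ 3 * (β ^ 2 * Real.exp (4 * β)) ≤
      1280 * Real.exp (-β / 4) :=
  calc 40 * (Lc β : ℝ) ^ 3 * Real.exp (-2 * β) ^ 3 * (β ^ 2 * Real.exp (4 * β))
      ≤ 40 * Real.exp (β / 2) ^ 3 * Real.exp (-2 * β) ^ 3 *
          (32 * Real.exp (β / 4) * Real.exp (4 * β)) := by
        gcongr
        · exact Lc_le_exp β
        · exact sq_le_exp_div_four hβ
    _ = 1280 * (Real.exp (β / 2) ^ 3 * Real.exp (-2 * β) ^ 3 *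
          (Real.exp (β / 4) * Real.exp (4 * β))) := by ring
    _ = 1280 * Real.exp (-β / 4) := by
        rw [← Real.exp_nat_mul, ← Real.exp_nat_mul, ← Real.exp_add, ← Real.exp_add,
          ← Real.exp_add]
        congr 2
        push_cast
        ring

end CriticalLength

end SPMP

/-- Corollary `cor:noescape`, no escape from `ℛ` on the relevant timescale:
started from a ground state, the probability of leaving `ℛ` before time `β²e^{4β}` is
`O(e^{-β/4})`; in matrix form, `1 - (e^{t𝓛_ℛ}𝟙_ℛ)(σ) ≤ C e^{-β/4}` for `t = β²e^{4β}`. -/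
theorem no_escape_from_R :
    ∃ C β₀ : ℝ, 0 < C ∧ ∀ β : ℝ, β₀ ≤ β →
      ∀ σ ∈ GroundP (Lc β),
        1 - ((mexp ((β ^ 2 * Real.exp (4 * β)) • killedGen (Lc β) β)).mulVec
              (fun η => if η ∈ Rset (Lc β) then (1 : ℝ) else 0)) σ ≤
          C * Real.exp (-β / 4) := by
  refine ⟨1280, 34, by norm_num, fun β hβ σ hσ => ?_⟩
  exact (no_escape_from_R_general (four_le_Lc (by linarith)) (by positivity)
    (Lc_sq_mul_exp_le hβ) hσ).trans (Lc_cube_mul_exp_mul_le (by linarith))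

end
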